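/- Let G be a cubic (3-regular) finite simple graph on n vertices and M(G) its magnification. Then G admits an efficient edge dominating set if and only if M(G) has a perfect edge dominating set of size at most 57n/10. -/

import Mathlib

/-- An edge `e` dominates an edge `f` if they share an endpoint (in particular,
every edge dominates itself). -/
def edgeDom {V : Type*} (e f : Sym2 V) : Prop := ∃ v, v ∈ e ∧ v ∈ f

/-- `P` is a perfect edge dominating set of `G`. -/
def IsPEDS {V : Type*} (G : SimpleGraph V) (P : Set (Sym2 V)) : Prop :=
  P ⊆ G.edgeSet ∧ ∀ f ∈ G.edgeSet, f ∉ P → ∃! e, e ∈ P ∧ edgeDom e f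

/-- `D` is an efficient edge dominating set of `G`. -/
def IsEEDS {V : Type*} (G : SimpleGraph V) (D : Set (Sym2 V)) : Prop :=
  D ⊆ G.edgeSet ∧ ∀ f ∈ G.edgeSet, ∃! e, e ∈ D ∧ edgeDom e f

/-- The shield graph: the vertex `vᵢ` of the paper corresponds to `i - 1 : Fin 12`. -/
def Shield : SimpleGraph (Fin 12) :=
  SimpleGraph.fromRel (fun i j =>
    j = i + 1 ∨ (i = 1 ∧ j = 3) ∨ (i = 5 ∧ j = 7) ∨ (i = 9 ∧ j = 11))

/-- The contact vertices `v₃, v₇, v₁₁` of the shield graph. -/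
def Contacts : Set (Fin 12) := {2, 6, 10}

/-- `G` is `r`-regular: every vertex has exactly `r` neighbors. -/
def IsRegular' {V : Type*} (G : SimpleGraph V) (r : ℕ) : Prop :=
  ∀ v : V, (G.neighborSet v).ncard = r

/-- `H` is the magnification of the cubic graph `G`, witnessed by the
contact-assignment `f`. -/
def IsMagnification {V : Type*} (G : SimpleGraph V) (f : V → V → Fin 12)
    (H : SimpleGraph (V × Fin 12)) : Prop :=
  (∀ v u, G.Adj v u → f v u ∈ Contacts) ∧
  (∀ v, Set.InjOn (f v) (G.neighborSet v)) ∧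
  (∀ v, ∀ c ∈ Contacts, ∃ u, G.Adj v u ∧ f v u = c) ∧
  (∀ a b : V × Fin 12, H.Adj a b ↔
    ((a.1 = b.1 ∧ Shield.Adj a.2 b.2) ∨
     (G.Adj a.1 b.1 ∧ f a.1 b.1 = a.2 ∧ f b.1 a.1 = b.2)))

set_option maxRecDepth 100000 in
theorem tri_aux : ∀ a p t q b l : Bool,
    (p = false → a.toNat + p.toNat + t.toNat + (p.toNat + q.toNat + l.toNat) = 1) →
    (q = false → b.toNat + q.toNat + t.toNat + (p.toNat + q.toNat + l.toNat) = 1) →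
    (t = false → a.toNat + p.toNat + t.toNat + (b.toNat + q.toNat + t.toNat) = 1) →
    (l = false → p.toNat + q.toNat + l.toNat ≤ 1) →
    (a = false → a.toNat + p.toNat + t.toNat ≤ 1) →
    (b = false → b.toNat + q.toNat + t.toNat ≤ 1) →
    (a, p, t, q, b, l) ∈ ([(false, false, true, false, false, false),
      (true, true, true, true, true, true), (false, false, false, true, false, false),
      (false, true, false, false, false, false)] : List _) := by
  intro a p t q b l
  cases a <;> cases p <;> cases t <;> cases q <;> cases b <;> cases l <;> simp

set_option maxRecDepth 100000 in
theorem shield_aux : ∀ e0 e1 e2 e3 e4 e5 e6 e7 e8 e9 e10 e11 t1 t2 t3 l1 l2 l3 : Bool,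
    ∀ d0 d1 d2 d3 d4 d5 d6 d7 d8 d9 d10 d11 : ℕ,
    d0 = e11.toNat + e0.toNat →
    d1 = e0.toNat + e1.toNat + t1.toNat →
    d2 = e1.toNat + e2.toNat + l1.toNat →
    d3 = e2.toNat + e3.toNat + t1.toNat →
    d4 = e3.toNat + e4.toNat →
    d5 = e4.toNat + e5.toNat + t2.toNat →
    d6 = e5.toNat + e6.toNat + l2.toNat →
    d7 = e6.toNat + e7.toNat + t2.toNat →
    d8 = e7.toNat + e8.toNat →
    d9 = e8.toNat + e9.toNat + t3.toNat →
    d10 = e9.toNat + e10.toNat + l3.toNat →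
    d11 = e10.toNat + e11.toNat + t3.toNat →
    (e0 = false → d0 + d1 = 1) → (e1 = false → d1 + d2 = 1) →
    (e2 = false → d2 + d3 = 1) → (e3 = false → d3 + d4 = 1) →
    (e4 = false → d4 + d5 = 1) → (e5 = false → d5 + d6 = 1) →
    (e6 = false → d6 + d7 = 1) → (e7 = false → d7 + d8 = 1) →
    (e8 = false → d8 + d9 = 1) → (e9 = false → d9 + d10 = 1) →
    (e10 = false → d10 + d11 = 1) → (e11 = false → d11 + d0 = 1) →
    (t1 = false → d1 + d3 = 1) → (t2 = false → d5 + d7 = 1) → (t3 = false → d9 + d11 = 1) →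
    (l1 = false → d2 ≤ 1) → (l2 = false → d6 ≤ 1) → (l3 = false → d10 ≤ 1) →
    (l1 = false ∧ l2 = false ∧ l3 = false ∧ d2 = 0 ∧ d6 = 0 ∧ d10 = 0 ∧
      d0 + d1 + d2 + d3 + d4 + d5 + d6 + d7 + d8 + d9 + d10 + d11 = 6) ∨
    (l1.toNat + l2.toNat + l3.toNat = 1 ∧ (l1 = false → d2 = 1) ∧ (l2 = false → d6 = 1) ∧
      (l3 = false → d10 = 1) ∧
      d0 + d1 + d2 + d3 + d4 + d5 + d6 + d7 + d8 + d9 + d10 + d11 = 15) ∨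
    (l1 = true ∧ l2 = true ∧ l3 = true ∧
      d0 + d1 + d2 + d3 + d4 + d5 + d6 + d7 + d8 + d9 + d10 + d11 = 33) := by
  intro e0 e1 e2 e3 e4 e5 e6 e7 e8 e9 e10 e11 t1 t2 t3 l1 l2 l3 d0 d1 d2 d3 d4 d5 d6 d7 d8 d9 d10 d11
    h0 h1 h2 h3 h4 h5 h6 h7 h8 h9 h10 h11 c0 c1 c2 c3 c4 c5 c6 c7 c8 c9 c10 c11 x1 x2 x3 y1 y2 y3
  have T1 := tri_aux e0 e1 t1 e2 e3 l1 (by grind) (by grind) (by grind) (by grind)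
    (by grind) (by grind)
  have T2 := tri_aux e4 e5 t2 e6 e7 l2 (by grind) (by grind) (by grind) (by grind)
    (by grind) (by grind)
  have T3 := tri_aux e8 e9 t3 e10 e11 l3 (by grind) (by grind) (by grind) (by grind)
    (by grind) (by grind)
  simp only [List.mem_cons, List.not_mem_nil, or_false, Prod.mk.injEq] at T1 T2 T3
  rcases T1 with ⟨rfl, rfl, rfl, rfl, rfl, rfl⟩ | ⟨rfl, rfl, rfl, rfl, rfl, rfl⟩ | ⟨rfl, rfl, rfl, rfl, rfl, rfl⟩ | ⟨rfl, rfl, rfl, rfl, rfl, rfl⟩ <;>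
  rcases T2 with ⟨rfl, rfl, rfl, rfl, rfl, rfl⟩ | ⟨rfl, rfl, rfl, rfl, rfl, rfl⟩ | ⟨rfl, rfl, rfl, rfl, rfl, rfl⟩ | ⟨rfl, rfl, rfl, rfl, rfl, rfl⟩ <;>
  simp at h0 h1 h2 h3 h4 h5 h6 h7 c0 c1 c2 c3 c4 c5 c6 x1 x2 y1 y2 <;>
  try (exfalso; omega)
  all_goals
  rcases T3 with ⟨rfl, rfl, rfl, rfl, rfl, rfl⟩ | ⟨rfl, rfl, rfl, rfl, rfl, rfl⟩ | ⟨rfl, rfl, rfl, rfl, rfl, rfl⟩ | ⟨rfl, rfl, rfl, rfl, rfl, rfl⟩ <;>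
  simp at * <;> omega

open scoped Classical in
theorem peds_iff {W : Type*} [Fintype W] (H K : SimpleGraph W) (hK : K ≤ H) :
    IsPEDS H K.edgeSet ↔
      ∀ x y, H.Adj x y → ¬ K.Adj x y → K.degree x + K.degree y = 1 := by
  have key : ∀ x y, H.Adj x y → ¬ K.Adj x y →
      ((∃! e, e ∈ K.edgeSet ∧ edgeDom e s(x, y)) ↔ K.degree x + K.degree y = 1) := by
    intro x y hxy hn
    have hd : Disjoint (K.incidenceFinset x) (K.incidenceFinset y) := by
      rw [Finset.disjoint_left]
      intro e he he'
      rw [SimpleGraph.mem_incidenceFinset] at he he'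
      have : e = s(x, y) := ((Sym2.mem_and_mem_iff hxy.ne).1 ⟨he.2, he'.2⟩)
      subst this
      exact hn he.1
    rw [← SimpleGraph.card_incidenceFinset_eq_degree, ← SimpleGraph.card_incidenceFinset_eq_degree,
      ← Finset.card_union_of_disjoint hd, Finset.card_eq_one, Finset.singleton_iff_unique_mem]
    apply existsUnique_congr
    intro e
    simp only [Finset.mem_union, SimpleGraph.mem_incidenceFinset, SimpleGraph.incidenceSet,
      Set.mem_sep_iff, edgeDom, Sym2.mem_iff]
    constructor
    · rintro ⟨h, v, hv, rfl | rfl⟩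
      · exact Or.inl ⟨h, hv⟩
      · exact Or.inr ⟨h, hv⟩
    · rintro (⟨h, hv⟩ | ⟨h, hv⟩)
      · exact ⟨h, x, hv, Or.inl rfl⟩
      · exact ⟨h, y, hv, Or.inr rfl⟩
  constructor
  · rintro ⟨-, h⟩ x y hxy hn
    exact (key x y hxy hn).1 (h s(x, y) hxy hn)
  · intro h
    refine ⟨SimpleGraph.edgeSet_mono hK, ?_⟩
    intro e
    induction e with
    | h x y =>
      intro hxy hn
      exact (key x y hxy hn).2 (h x y hxy hn)

theorem eeds_iff {W : Type*} (G L : SimpleGraph W) :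
    IsEEDS G L.edgeSet ↔ IsPEDS G L.edgeSet ∧ ∀ v a b, L.Adj v a → L.Adj v b → a = b := by
  constructor
  · rintro ⟨h1, h2⟩
    refine ⟨⟨h1, fun f hf _ => h2 f hf⟩, ?_⟩
    intro v a b ha hb
    have := (h2 s(v, a) (h1 ha)).unique
      (y₁ := s(v, a)) (y₂ := s(v, b)) ⟨ha, v, by simp, by simp⟩ ⟨hb, v, by simp, by simp⟩
    simp only [Sym2.eq_iff] at this
    grind
  · rintro ⟨⟨h1, h2⟩, h3⟩
    refine ⟨h1, ?_⟩
    intro e he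
    by_cases hL : e ∈ L.edgeSet
    · refine ⟨e, ⟨hL, ?_⟩, ?_⟩
      · induction e with
        | h x y => exact ⟨x, by simp, by simp⟩
      · rintro e' ⟨he', v, hv, hv'⟩
        obtain ⟨a, rfl⟩ := hv
        obtain ⟨b, rfl⟩ := hv'
        rw [h3 v a b he' hL]
    · exact h2 e he hL

theorem exists_graph {W : Type*} (H : SimpleGraph W) (P : Set (Sym2 W)) (h : P ⊆ H.edgeSet) :
    ∃ K : SimpleGraph W, K ≤ H ∧ K.edgeSet = P := by
  have : (SimpleGraph.fromEdgeSet P).edgeSet = P := by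
    rw [SimpleGraph.edgeSet_fromEdgeSet]
    ext e
    simp only [Set.mem_sdiff, and_iff_left_iff_imp]
    intro he
    exact H.not_isDiag_of_mem_edgeSet (h he)
  refine ⟨_, ?_, this⟩
  rw [← SimpleGraph.edgeSet_subset_edgeSet, this]
  exact h

open scoped Classical in
theorem count_ab {V : Type*} [Fintype V] (G L : SimpleGraph V) (hL : L ≤ G)
    (hc : IsRegular' G 3)
    (h : ∀ x y, G.Adj x y → ¬ L.Adj x y → L.degree x + L.degree y = 1) :
    3 * (Finset.univ.filter fun v => L.degree v = 0).card =
      2 * (Finset.univ.filter fun v => L.degree v = 1).card := by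
  have hdeg : ∀ v, (Finset.univ.filter fun u => G.Adj v u ∧ ¬ L.Adj v u).card + L.degree v = 3 := by
    intro v
    have h1 := hc v
    rw [Set.ncard_eq_toFinset_card'] at h1
    rw [← h1, ← SimpleGraph.card_neighborFinset_eq_degree, ← Finset.card_union_of_disjoint]
    · congr 1
      ext u
      have := @hL v u
      simp
      tauto
    · rw [Finset.disjoint_left]
      intro u
      simp
  have := Finset.sum_card_bipartiteAbove_eq_sum_card_bipartiteBelow
    (s := Finset.univ.filter fun v => L.degree v = 0)
    (t := Finset.univ.filter fun v => L.degree v = 1) (fun u v => G.Adj u v ∧ ¬ L.Adj u v)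
  rw [Finset.sum_congr rfl (g := fun _ => 3), Finset.sum_congr (s₁ := Finset.univ.filter fun v => L.degree v = 1) rfl (g := fun _ => 2)] at this
  · simp at this
    omega
  · intro v hv
    simp only [Finset.mem_filter, Finset.mem_univ, true_and] at hv
    have h2 := hdeg v
    have : (Finset.univ.filter fun u => G.Adj v u ∧ ¬ L.Adj v u).card = 2 := by omega
    rw [← this]
    congr 1
    ext u
    simp only [Finset.bipartiteBelow, Finset.mem_filter, Finset.mem_univ, true_and, G.adj_comm u v,
      L.adj_comm u v, and_iff_right_iff_imp, and_imp]
    intro h3 h4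
    have := h v u h3 h4
    omega
  · intro v hv
    simp only [Finset.mem_filter, Finset.mem_univ, true_and] at hv
    have h2 := hdeg v
    have : (Finset.univ.filter fun u => G.Adj v u ∧ ¬ L.Adj v u).card = 3 := by omega
    rw [← this]
    congr 1
    ext u
    simp only [Finset.bipartiteAbove, Finset.mem_filter, Finset.mem_univ, true_and, 
      and_iff_right_iff_imp, and_imp]
    intro h3 h4
    have := h v u h3 h4
    omega

open scoped Classical in
theorem deg_split {V : Type*} [Fintype V] (G : SimpleGraph V) (f : V → V → Fin 12)
    (H K : SimpleGraph (V × Fin 12)) (hmag : IsMagnification G f H) (hK : K ≤ H) (v : V) (i : Fin 12) :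
    K.degree (v, i) = (∑ j, if K.Adj (v, i) (v, j) then 1 else 0) +
      (Finset.univ.filter fun u => G.Adj v u ∧ f v u = i ∧ K.Adj (v, i) (u, f u v)).card := by
  rw [← Finset.card_filter, ← SimpleGraph.card_neighborFinset_eq_degree]
  rw [← Finset.card_image_of_injective (f := fun j : Fin 12 => (v, j)) _ (by intro a b; simp),
    ← Finset.card_image_of_injective (f := fun u : V => (u, f u v)) _ (by intro a b; simp; tauto),
    ← Finset.card_union_of_disjoint]
  · congr 1
    ext ⟨u, j⟩
    simp only [SimpleGraph.mem_neighborFinset, Finset.mem_union, Finset.mem_image, Finset.mem_filter,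
      Finset.mem_univ, true_and, Prod.mk.injEq]
    constructor
    · intro h
      rcases (hmag.2.2.2 _ _).1 (hK h) with ⟨h1, h2⟩ | ⟨h1, h2, h3⟩
      · simp only at h1
        subst h1
        exact Or.inl ⟨j, h, rfl, rfl⟩
      · simp only at h1 h2 h3
        subst h3
        exact Or.inr ⟨u, ⟨h1, h2, h⟩, rfl, rfl⟩
    · rintro (⟨j, h, rfl, rfl⟩ | ⟨u, ⟨h1, h2, h⟩, rfl, rfl⟩) <;> exact h
  · rw [Finset.disjoint_left]
    rintro ⟨u, j⟩ h1 h2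
    simp only [Finset.mem_image, Finset.mem_filter, Finset.mem_univ, true_and, Prod.mk.injEq] at h1 h2
    obtain ⟨a, h3, rfl, -⟩ := h2
    obtain ⟨b, h4, rfl, -⟩ := h1
    exact h3.1.ne rfl
    
open scoped Classical in
theorem two_ncard {V : Type*} [Fintype V] (K : SimpleGraph (V × Fin 12)) :
    2 * K.edgeSet.ncard = ∑ v : V, ∑ i : Fin 12, K.degree (v, i) := by
  rw [← Fintype.sum_prod_type', SimpleGraph.sum_degrees_eq_twice_card_edges,
    Set.ncard_eq_toFinset_card']
  rfl

instance shieldDec : DecidableRel Shield.Adj := fun i j =>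
  decidable_of_iff _ (SimpleGraph.fromRel_adj _ i j).symm

def baseList : List (Fin 12 × Fin 12) :=
  [(0, 1), (1, 2), (2, 3), (3, 4), (6, 7), (9, 10), (1, 3)]

def baseList0 : List (Fin 12 × Fin 12) := [(1, 3), (5, 7), (9, 11)]

def cfg (t i j : Fin 12) : Bool :=
  if t = 0 then baseList0.contains (i, j) || baseList0.contains (j, i)
  else baseList.contains (i + 2 - t, j + 2 - t) || baseList.contains (j + 2 - t, i + 2 - t)

def cdeg (t i : Fin 12) : ℕ :=
  (∑ j, if cfg t i j = true then 1 else 0) + if t ≠ 0 ∧ t = i then 1 else 0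

theorem cfg_symm (t i j : Fin 12) (h : cfg t i j = true) : cfg t j i = true := by
  unfold cfg at *
  split_ifs at * <;> rw [Bool.or_comm] <;> exact h

theorem cfg_shield : ∀ t ∈ ({0, 2, 6, 10} : Finset (Fin 12)), ∀ i j, cfg t i j = true →
    Shield.Adj i j := by
  decide +kernel

theorem cdeg_int : ∀ t ∈ ({0, 2, 6, 10} : Finset (Fin 12)), ∀ i j, Shield.Adj i j →
    ¬ cfg t i j = true → cdeg t i + cdeg t j = 1 := by
  decide +kernel

theorem cdeg_sum0 : ∑ i, cdeg 0 i = 6 := by decide +kernel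

theorem cdeg_sum1 : ∀ t ∈ ({2, 6, 10} : Finset (Fin 12)), ∑ i, cdeg t i = 15 := by decide +kernel

theorem cdeg_c0 : ∀ c ∈ ({2, 6, 10} : Finset (Fin 12)), cdeg 0 c = 0 := by decide +kernel

theorem cdeg_c1 : ∀ t ∈ ({2, 6, 10} : Finset (Fin 12)), ∀ c ∈ ({2, 6, 10} : Finset (Fin 12)),
    c ≠ t → cdeg t c = 1 := by decide +kernel

theorem mem_contacts (c : Fin 12) : c ∈ Contacts ↔ c ∈ ({2, 6, 10} : Finset (Fin 12)) := by
  simp [Contacts]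

open scoped Classical in
theorem forward {V : Type*} [Fintype V] (G : SimpleGraph V)
    (hcubic : IsRegular' G 3) (f : V → V → Fin 12) (H : SimpleGraph (V × Fin 12))
    (hmag : IsMagnification G f H) (D : Set (Sym2 V)) (hD : IsEEDS G D) :
    ∃ P : Set (Sym2 (V × Fin 12)), IsPEDS H P ∧
      (P.ncard : ℚ) ≤ 57 * Fintype.card V / 10 := by
  obtain ⟨L, hL, rfl⟩ := exists_graph G D hD.1
  obtain ⟨hp, huniq⟩ := (eeds_iff G L).1 hD
  rw [peds_iff G L hL] at hp
  have hτ : ∀ v, ∃ t : Fin 12, (L.degree v = 0 ∧ (∀ u, ¬ L.Adj v u) ∧ t = 0) ∨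
      (L.degree v = 1 ∧ ∃ m, (∀ u, L.Adj v u ↔ u = m) ∧ t = f v m) := by
    intro v
    by_cases h : ∃ m, L.Adj v m
    · obtain ⟨m, hm⟩ := h
      have h1 : ∀ u, L.Adj v u ↔ u = m :=
        fun u => ⟨fun hu => huniq v u m hu hm, fun hu => hu ▸ hm⟩
      refine ⟨f v m, Or.inr ⟨?_, m, h1, rfl⟩⟩
      rw [← SimpleGraph.card_neighborFinset_eq_degree, Finset.card_eq_one]
      refine ⟨m, ?_⟩
      ext u
      simp [h1]
    · push Not at h
      refine ⟨0, Or.inl ⟨?_, h, rfl⟩⟩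
      rw [← SimpleGraph.card_neighborFinset_eq_degree, Finset.card_eq_zero]
      ext u
      simp [h]
  choose τ hτ using hτ
  have hf : ∀ v u, G.Adj v u → f v u ∈ ({2, 6, 10} : Finset (Fin 12)) := fun v u h =>
    (mem_contacts _).1 (hmag.1 v u h)
  have hτmem : ∀ v, τ v ∈ ({0, 2, 6, 10} : Finset (Fin 12)) := by
    intro v
    rcases hτ v with ⟨-, -, h⟩ | ⟨-, m, hm, h⟩
    · simp [h]
    · have := hf v m (hL ((hm m).2 rfl))
      rw [h]
      exact Finset.mem_insert_of_mem this
  let K : SimpleGraph (V × Fin 12) :=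
    { Adj := fun x y => (x.1 = y.1 ∧ cfg (τ x.1) x.2 y.2 = true) ∨
        (L.Adj x.1 y.1 ∧ f x.1 y.1 = x.2 ∧ f y.1 x.1 = y.2)
      symm := ⟨by
        rintro ⟨v, i⟩ ⟨u, j⟩ (⟨h1, h2⟩ | ⟨h1, h2, h3⟩)
        · simp only at h1 h2
          subst h1
          exact Or.inl ⟨rfl, cfg_symm _ _ _ h2⟩
        · exact Or.inr ⟨h1.symm, h3, h2⟩⟩
      loopless := ⟨by
        rintro ⟨v, i⟩ (⟨h1, h2⟩ | ⟨h1, h2, h3⟩)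
        · exact (cfg_shield _ (hτmem v) _ _ h2).ne rfl
        · exact h1.ne rfl⟩ }
  have hKH : K ≤ H := by
    rintro ⟨v, i⟩ ⟨u, j⟩ (⟨h1, h2⟩ | ⟨h1, h2, h3⟩)
    · exact (hmag.2.2.2 _ _).2 (Or.inl ⟨h1, cfg_shield _ (hτmem v) _ _ h2⟩)
    · exact (hmag.2.2.2 _ _).2 (Or.inr ⟨hL h1, h2, h3⟩)
  have hKint : ∀ v i j, K.Adj (v, i) (v, j) ↔ cfg (τ v) i j = true := by
    intro v i j
    constructor
    · rintro (⟨h1, h2⟩ | ⟨h1, h2, h3⟩)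
      · exact h2
      · exact (h1.ne rfl).elim
    · intro h
      exact Or.inl ⟨rfl, h⟩
  have hKlink : ∀ v u, G.Adj v u → (K.Adj (v, f v u) (u, f u v) ↔ L.Adj v u) := by
    intro v u hvu
    constructor
    · rintro (⟨h1, h2⟩ | ⟨h1, h2, h3⟩)
      · exact (hvu.ne h1).elim
      · exact h1
    · intro h
      exact Or.inr ⟨h, rfl, rfl⟩
  clear_value K
  have hdeg : ∀ v i, K.degree (v, i) = cdeg (τ v) i := by
    intro v i
    rw [deg_split G f H K hmag hKH, cdeg]
    congr 1
    · simp only [hKint]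
    · have h1 : (Finset.univ.filter fun u => G.Adj v u ∧ f v u = i ∧ K.Adj (v, i) (u, f u v)) =
          Finset.univ.filter fun u => L.Adj v u ∧ f v u = i := by
        ext u
        simp only [Finset.mem_filter, Finset.mem_univ, true_and]
        constructor
        · rintro ⟨h1, rfl, h2⟩
          exact ⟨(hKlink v u h1).1 h2, rfl⟩
        · rintro ⟨h1, rfl⟩
          exact ⟨hL h1, rfl, (hKlink v u (hL h1)).2 h1⟩
      rw [h1]
      rcases hτ v with ⟨-, h2, h⟩ | ⟨-, m, hm, h⟩
      · simp [h, h2]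
      · have h3 := hf v m (hL ((hm m).2 rfl))
        have h4 : τ v ≠ 0 := by
          rw [h]
          intro h5
          rw [h5] at h3
          revert h3
          decide
        simp only [hm, h4, ne_eq, not_false_eq_true, true_and, h]
        split_ifs with h6
        · rw [Finset.card_eq_one]
          refine ⟨m, ?_⟩
          ext u
          simp only [Finset.mem_filter, Finset.mem_univ, true_and, Finset.mem_singleton]
          grind
        · rw [Finset.card_eq_zero]
          ext u
          simp only [Finset.mem_filter, Finset.mem_univ, true_and, Finset.notMem_empty, iff_false]
          grind
  refine ⟨K.edgeSet, (peds_iff H K hKH).2 ?_, ?_⟩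
  · rintro ⟨v, i⟩ ⟨u, j⟩ hH hn
    rw [hdeg, hdeg]
    rcases (hmag.2.2.2 _ _).1 hH with ⟨h1, h2⟩ | ⟨h1, h2, h3⟩
    · simp only at h1 h2
      subst h1
      exact cdeg_int _ (hτmem v) _ _ h2 (by rwa [hKint] at hn)
    · simp only at h1 h2 h3
      subst h2 h3
      have hn' : ¬ L.Adj v u := by rwa [hKlink v u h1] at hn
      have hsum := hp v u h1 hn'
      have aux : ∀ a b, G.Adj a b → ¬ L.Adj a b → L.degree a = 1 → cdeg (τ a) (f a b) = 1 := by
        intro a b hab hn' hd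
        rcases hτ a with ⟨h0, h2, h⟩ | ⟨-, m, hm, h⟩
        · omega
        · have h5 := hL ((hm m).2 rfl)
          rw [h]
          apply cdeg_c1 _ (hf a m h5) _ (hf a b hab)
          intro h6
          have := hmag.2.1 a hab h5 h6
          subst this
          exact hn' ((hm _).2 rfl)
      have aux0 : ∀ a b, G.Adj a b → L.degree a = 0 → cdeg (τ a) (f a b) = 0 := by
        intro a b hab hd
        rcases hτ a with ⟨h0, h2, h⟩ | ⟨h1, m, hm, h⟩
        · rw [h]
          exact cdeg_c0 _ (hf a b hab)
        · omega
      rcases Nat.eq_zero_or_pos (L.degree v) with h0 | h0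
      · rw [aux0 v u h1 h0, aux u v h1.symm (fun h => hn' h.symm) (by omega)]
      · rw [aux0 u v h1.symm (by omega), aux v u h1 hn' (by omega)]
  · have h2 := two_ncard K
    have hcount := count_ab G L hL hcubic hp
    have hs : ∀ v, ∑ i, K.degree (v, i) =
        (if L.degree v = 0 then 6 else 0) + (if L.degree v = 1 then 15 else 0) := by
      intro v
      simp only [hdeg]
      rcases hτ v with ⟨h0, h2, h⟩ | ⟨h1, m, hm, h⟩
      · simp [h0, h, cdeg_sum0]
      · have h5 := hL ((hm m).2 rfl)
        simp [h1, h, cdeg_sum1 _ (hf v m h5)]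
    have hone : ∀ v, 1 =
        (if L.degree v = 0 then 1 else 0) + (if L.degree v = 1 then 1 else 0) := by
      intro v
      rcases hτ v with ⟨h0, h2, h⟩ | ⟨h1, m, hm, h⟩
      · simp [h0]
      · simp [h1]
    have hcard : Fintype.card V = (Finset.univ.filter fun v => L.degree v = 0).card +
        (Finset.univ.filter fun v => L.degree v = 1).card := by
      rw [Finset.card_filter, Finset.card_filter, ← Finset.sum_add_distrib,
        ← Finset.sum_congr rfl (fun v _ => hone v)]
      simp
    rw [Finset.sum_congr rfl (fun v _ => hs v), Finset.sum_add_distrib, ← Finset.sum_filter,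
      ← Finset.sum_filter, Finset.sum_const, Finset.sum_const, smul_eq_mul, smul_eq_mul] at h2
    rw [hcard]
    have : 10 * K.edgeSet.ncard ≤ 57 * ((Finset.univ.filter fun v => L.degree v = 0).card +
        (Finset.univ.filter fun v => L.degree v = 1).card) := by omega
    rw [le_div_iff₀ (by norm_num), mul_comm]
    exact_mod_cast this

open scoped Classical in
theorem sum2 {V : Type*} (K : SimpleGraph (V × Fin 12)) (v : V) 
    (hK : ∀ i j, K.Adj (v, i) (v, j) → Shield.Adj i j) (i a b : Fin 12) (hab : a ≠ b)
    (h : ∀ j, Shield.Adj i j → j = a ∨ j = b) :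
    (∑ j, if K.Adj (v, i) (v, j) then 1 else 0) =
      (decide (K.Adj (v, i) (v, a))).toNat + (decide (K.Adj (v, i) (v, b))).toNat := by
  rw [← Finset.sum_subset (s₁ := {a, b}) (Finset.subset_univ _)]
  · rw [Finset.sum_pair hab]
    simp only [Bool.toNat, Bool.cond_decide]
  · intro j _ hj
    rw [if_neg]
    intro h1
    have := h j (hK _ _ h1)
    simp at hj
    tauto

open scoped Classical in
theorem sum3 {V : Type*} (K : SimpleGraph (V × Fin 12)) (v : V) 
    (hK : ∀ i j, K.Adj (v, i) (v, j) → Shield.Adj i j) (i a b c : Fin 12) (hab : a ≠ b)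
    (hac : a ≠ c) (hbc : b ≠ c)
    (h : ∀ j, Shield.Adj i j → j = a ∨ j = b ∨ j = c) :
    (∑ j, if K.Adj (v, i) (v, j) then 1 else 0) =
      (decide (K.Adj (v, i) (v, a))).toNat + (decide (K.Adj (v, i) (v, b))).toNat
      + (decide (K.Adj (v, i) (v, c))).toNat := by
  rw [← Finset.sum_subset (s₁ := {a, b, c}) (Finset.subset_univ _)]
  · rw [Finset.sum_insert (by simp [hab, hac]), Finset.sum_pair hbc]
    simp only [Bool.toNat, Bool.cond_decide, add_assoc]
  · intro j _ hj
    rw [if_neg]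
    intro h1
    have := h j (hK _ _ h1)
    simp at hj
    tauto

def linkGraph {V : Type*} (G : SimpleGraph V) (f : V → V → Fin 12)
    (K : SimpleGraph (V × Fin 12)) : SimpleGraph V where
  Adj u v := G.Adj u v ∧ K.Adj (u, f u v) (v, f v u)
  symm := ⟨fun _ _ h => ⟨h.1.symm, h.2.symm⟩⟩
  loopless := ⟨fun _ h => h.1.ne rfl⟩

open scoped Classical in
theorem local_class {V : Type*} [Fintype V] (G : SimpleGraph V)
    (f : V → V → Fin 12) (H K : SimpleGraph (V × Fin 12))
    (hmag : IsMagnification G f H) (hKH : K ≤ H)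
    (hP : ∀ x y, H.Adj x y → ¬ K.Adj x y → K.degree x + K.degree y = 1) (v : V) :
    ((linkGraph G f K).degree v = 0 ∧ (∀ u, G.Adj v u → ¬ (linkGraph G f K).Adj v u →
        K.degree (v, f v u) = 0) ∧ ∑ i, K.degree (v, i) = 6) ∨
    ((linkGraph G f K).degree v = 1 ∧ (∀ u, G.Adj v u → ¬ (linkGraph G f K).Adj v u →
        K.degree (v, f v u) = 1) ∧ ∑ i, K.degree (v, i) = 15) ∨
    ((linkGraph G f K).degree v = 3 ∧ (∀ u, G.Adj v u → (linkGraph G f K).Adj v u) ∧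
      ∑ i, K.degree (v, i) = 33) := by
  obtain ⟨u1, hu1, hf1⟩ := hmag.2.2.1 v 2 (by simp [Contacts])
  obtain ⟨u2, hu2, hf2⟩ := hmag.2.2.1 v 6 (by simp [Contacts])
  obtain ⟨u3, hu3, hf3⟩ := hmag.2.2.1 v 10 (by simp [Contacts])
  have hall : ∀ u, G.Adj v u → u = u1 ∨ u = u2 ∨ u = u3 := by
    intro u hu
    have h := hmag.1 v u hu
    simp only [Contacts, Set.mem_insert_iff, Set.mem_singleton_iff] at h
    rcases h with h | h | h
    · exact Or.inl (hmag.2.1 v hu hu1 (h.trans hf1.symm))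
    · exact Or.inr (Or.inl (hmag.2.1 v hu hu2 (h.trans hf2.symm)))
    · exact Or.inr (Or.inr (hmag.2.1 v hu hu3 (h.trans hf3.symm)))
  have n12 : u1 ≠ u2 := by
    rintro rfl
    rw [hf1] at hf2
    revert hf2
    decide
  have n13 : u1 ≠ u3 := by
    rintro rfl
    rw [hf1] at hf3
    revert hf3
    decide
  have n23 : u2 ≠ u3 := by
    rintro rfl
    rw [hf2] at hf3
    revert hf3
    decide
  have hLadj : ∀ u, (linkGraph G f K).Adj v u ↔ G.Adj v u ∧ K.Adj (v, f v u) (u, f u v) :=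
    fun u => Iff.rfl
  generalize hLdef : linkGraph G f K = L at *
  have hLdeg : L.degree v = (decide (L.Adj v u1)).toNat + (decide (L.Adj v u2)).toNat +
      (decide (L.Adj v u3)).toNat := by
    have : L.neighborFinset v = ({u1, u2, u3} : Finset V).filter (fun u => L.Adj v u) := by
      ext u
      simp only [SimpleGraph.mem_neighborFinset, Finset.mem_filter, Finset.mem_insert,
        Finset.mem_singleton]
      have := hall u
      have := hLadj u
      tauto
    rw [← SimpleGraph.card_neighborFinset_eq_degree, this, Finset.card_filter,
      Finset.sum_insert (by simp [n12, n13]), Finset.sum_pair n23]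
    simp only [Bool.toNat, Bool.cond_decide, add_assoc]
  have hlink : ∀ i u, G.Adj v u → f v u = i →
      (Finset.univ.filter fun u => G.Adj v u ∧ f v u = i ∧ K.Adj (v, i) (u, f u v)).card =
      (decide (L.Adj v u)).toNat := by
    rintro i u hu rfl
    by_cases hl : L.Adj v u
    · simp only [hl, decide_true, Bool.toNat_true]
      rw [Finset.card_eq_one]
      refine ⟨u, ?_⟩
      ext w
      simp only [Finset.mem_filter, Finset.mem_univ, true_and, Finset.mem_singleton]
      constructor
      · rintro ⟨h1, h2, -⟩
        exact hmag.2.1 v h1 hu h2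
      · rintro rfl
        exact ⟨hu, rfl, ((hLadj _).1 hl).2⟩
    · simp only [hl, decide_false, Bool.toNat_false]
      rw [Finset.card_eq_zero, Finset.filter_eq_empty_iff]
      rintro w - ⟨h1, h2, h3⟩
      have := hmag.2.1 v h1 hu h2
      subst this
      exact hl ((hLadj _).2 ⟨h1, h3⟩)
  have hno : ∀ i, i ∉ ({2, 6, 10} : Finset (Fin 12)) →
      (Finset.univ.filter fun u => G.Adj v u ∧ f v u = i ∧ K.Adj (v, i) (u, f u v)).card = 0 := by
    intro i hi
    rw [Finset.card_eq_zero, Finset.filter_eq_empty_iff]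
    rintro w - ⟨h1, rfl, -⟩
    exact hi ((mem_contacts _).1 (hmag.1 v w h1))
  have hKS : ∀ i j, K.Adj (v, i) (v, j) → Shield.Adj i j := by
    intro i j h
    rcases (hmag.2.2.2 _ _).1 (hKH h) with ⟨-, h2⟩ | ⟨h1, -, -⟩
    · exact h2
    · exact (h1.ne rfl).elim
  have hint : ∀ i j, Shield.Adj i j → decide (K.Adj (v, i) (v, j)) = false →
      K.degree (v, i) + K.degree (v, j) = 1 := by
    intro i j hij h
    exact hP _ _ ((hmag.2.2.2 _ _).2 (Or.inl ⟨rfl, hij⟩)) (by simpa using h)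
  have hlk : ∀ i u, G.Adj v u → f v u = i → decide (L.Adj v u) = false →
      K.degree (v, i) ≤ 1 := by
    rintro i u hu rfl h
    have := hP (v, f v u) (u, f u v) ((hmag.2.2.2 _ _).2 (Or.inr ⟨hu, rfl, rfl⟩))
      (fun h' => by simp [(hLadj u).2 ⟨hu, h'⟩] at h)
    omega
  have d0 : K.degree (v, 0) = (decide (K.Adj (v, 11) (v, 0))).toNat + (decide (K.Adj (v, 0) (v, 1))).toNat := by
    rw [deg_split G f H K hmag hKH, sum2 K v hKS 0 11 1 (by decide) (by decide),
      hno 0 (by decide), add_zero,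
      K.adj_comm (v, 0) (v, 11)]
  have d1 : K.degree (v, 1) = (decide (K.Adj (v, 0) (v, 1))).toNat + (decide (K.Adj (v, 1) (v, 2))).toNat + (decide (K.Adj (v, 1) (v, 3))).toNat := by
    rw [deg_split G f H K hmag hKH, sum3 K v hKS 1 0 2 3 (by decide) (by decide) (by decide) (by decide),
      hno 1 (by decide), add_zero,
      K.adj_comm (v, 1) (v, 0)]
  have d2 : K.degree (v, 2) = (decide (K.Adj (v, 1) (v, 2))).toNat + (decide (K.Adj (v, 2) (v, 3))).toNat + (decide (L.Adj v u1)).toNat := by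
    rw [deg_split G f H K hmag hKH, sum2 K v hKS 2 1 3 (by decide) (by decide),
      hlink 2 u1 hu1 hf1,
      K.adj_comm (v, 2) (v, 1)]
  have d3 : K.degree (v, 3) = (decide (K.Adj (v, 2) (v, 3))).toNat + (decide (K.Adj (v, 3) (v, 4))).toNat + (decide (K.Adj (v, 1) (v, 3))).toNat := by
    rw [deg_split G f H K hmag hKH, sum3 K v hKS 3 2 4 1 (by decide) (by decide) (by decide) (by decide),
      hno 3 (by decide), add_zero,
      K.adj_comm (v, 3) (v, 2), K.adj_comm (v, 3) (v, 1)]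
  have d4 : K.degree (v, 4) = (decide (K.Adj (v, 3) (v, 4))).toNat + (decide (K.Adj (v, 4) (v, 5))).toNat := by
    rw [deg_split G f H K hmag hKH, sum2 K v hKS 4 3 5 (by decide) (by decide),
      hno 4 (by decide), add_zero,
      K.adj_comm (v, 4) (v, 3)]
  have d5 : K.degree (v, 5) = (decide (K.Adj (v, 4) (v, 5))).toNat + (decide (K.Adj (v, 5) (v, 6))).toNat + (decide (K.Adj (v, 5) (v, 7))).toNat := by
    rw [deg_split G f H K hmag hKH, sum3 K v hKS 5 4 6 7 (by decide) (by decide) (by decide) (by decide),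
      hno 5 (by decide), add_zero,
      K.adj_comm (v, 5) (v, 4)]
  have d6 : K.degree (v, 6) = (decide (K.Adj (v, 5) (v, 6))).toNat + (decide (K.Adj (v, 6) (v, 7))).toNat + (decide (L.Adj v u2)).toNat := by
    rw [deg_split G f H K hmag hKH, sum2 K v hKS 6 5 7 (by decide) (by decide),
      hlink 6 u2 hu2 hf2,
      K.adj_comm (v, 6) (v, 5)]
  have d7 : K.degree (v, 7) = (decide (K.Adj (v, 6) (v, 7))).toNat + (decide (K.Adj (v, 7) (v, 8))).toNat + (decide (K.Adj (v, 5) (v, 7))).toNat := by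
    rw [deg_split G f H K hmag hKH, sum3 K v hKS 7 6 8 5 (by decide) (by decide) (by decide) (by decide),
      hno 7 (by decide), add_zero,
      K.adj_comm (v, 7) (v, 6), K.adj_comm (v, 7) (v, 5)]
  have d8 : K.degree (v, 8) = (decide (K.Adj (v, 7) (v, 8))).toNat + (decide (K.Adj (v, 8) (v, 9))).toNat := by
    rw [deg_split G f H K hmag hKH, sum2 K v hKS 8 7 9 (by decide) (by decide),
      hno 8 (by decide), add_zero,
      K.adj_comm (v, 8) (v, 7)]
  have d9 : K.degree (v, 9) = (decide (K.Adj (v, 8) (v, 9))).toNat + (decide (K.Adj (v, 9) (v, 10))).toNat + (decide (K.Adj (v, 9) (v, 11))).toNat := by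
    rw [deg_split G f H K hmag hKH, sum3 K v hKS 9 8 10 11 (by decide) (by decide) (by decide) (by decide),
      hno 9 (by decide), add_zero,
      K.adj_comm (v, 9) (v, 8)]
  have d10 : K.degree (v, 10) = (decide (K.Adj (v, 9) (v, 10))).toNat + (decide (K.Adj (v, 10) (v, 11))).toNat + (decide (L.Adj v u3)).toNat := by
    rw [deg_split G f H K hmag hKH, sum2 K v hKS 10 9 11 (by decide) (by decide),
      hlink 10 u3 hu3 hf3,
      K.adj_comm (v, 10) (v, 9)]
  have d11 : K.degree (v, 11) = (decide (K.Adj (v, 10) (v, 11))).toNat + (decide (K.Adj (v, 11) (v, 0))).toNat + (decide (K.Adj (v, 9) (v, 11))).toNat := by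
    rw [deg_split G f H K hmag hKH, sum3 K v hKS 11 10 0 9 (by decide) (by decide) (by decide) (by decide),
      hno 11 (by decide), add_zero,
      K.adj_comm (v, 11) (v, 10), K.adj_comm (v, 11) (v, 9)]
  have key := shield_aux _ _ _ _ _ _ _ _ _ _ _ _ _ _ _ _ _ _ _ _ _ _ _ _ _ _ _ _ _ _
    d0 d1 d2 d3 d4 d5 d6 d7 d8 d9 d10 d11
    (hint 0 1 (by decide))
    (hint 1 2 (by decide))
    (hint 2 3 (by decide))
    (hint 3 4 (by decide))
    (hint 4 5 (by decide))
    (hint 5 6 (by decide))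
    (hint 6 7 (by decide))
    (hint 7 8 (by decide))
    (hint 8 9 (by decide))
    (hint 9 10 (by decide))
    (hint 10 11 (by decide))
    (hint 11 0 (by decide))
    (hint 1 3 (by decide))
    (hint 5 7 (by decide))
    (hint 9 11 (by decide))
    (hlk 2 u1 hu1 hf1) (hlk 6 u2 hu2 hf2) (hlk 10 u3 hu3 hf3)
  have hsum : ∑ i, K.degree (v, i) = K.degree (v, 0) + K.degree (v, 1) + K.degree (v, 2) +
      K.degree (v, 3) + K.degree (v, 4) + K.degree (v, 5) + K.degree (v, 6) + K.degree (v, 7) +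
      K.degree (v, 8) + K.degree (v, 9) + K.degree (v, 10) + K.degree (v, 11) := by
    simp only [Fin.sum_univ_succ, Fin.sum_univ_zero, add_zero, add_assoc]
    rfl
  rw [hsum, hLdeg]
  clear d0 d1 d2 d3 d4 d5 d6 d7 d8 d9 d10 d11 hsum hLdeg
  rcases key with ⟨a1, a2, a3, b1, b2, b3, hs⟩ | ⟨a, b1, b2, b3, hs⟩ | ⟨a1, a2, a3, hs⟩
  · refine Or.inl ⟨by rw [a1, a2, a3]; rfl, ?_, hs⟩
    intro u hu hl
    rcases hall u hu with rfl | rfl | rfl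
    · rw [hf1, b1]
    · rw [hf2, b2]
    · rw [hf3, b3]
  · refine Or.inr (Or.inl ⟨a, ?_, hs⟩)
    intro u hu hl
    rcases hall u hu with rfl | rfl | rfl
    · rw [hf1, b1 (by simpa using hl)]
    · rw [hf2, b2 (by simpa using hl)]
    · rw [hf3, b3 (by simpa using hl)]
  · refine Or.inr (Or.inr ⟨by rw [a1, a2, a3]; rfl, ?_, hs⟩)
    intro u hu
    rcases hall u hu with rfl | rfl | rfl
    · simpa using a1
    · simpa using a2
    · simpa using a3

open scoped Classical in
theorem backward {V : Type*} [Fintype V] (G : SimpleGraph V)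
    (hcubic : IsRegular' G 3) (f : V → V → Fin 12) (H : SimpleGraph (V × Fin 12))
    (hmag : IsMagnification G f H) (P : Set (Sym2 (V × Fin 12))) (hP : IsPEDS H P)
    (hcard : (P.ncard : ℚ) ≤ 57 * Fintype.card V / 10) :
    ∃ D : Set (Sym2 V), IsEEDS G D := by
  obtain ⟨K, hKH, rfl⟩ := exists_graph H P hP.1
  rw [peds_iff H K hKH] at hP
  have hloc := local_class G f H K hmag hKH hP
  have hLadj : ∀ v u, (linkGraph G f K).Adj v u ↔ G.Adj v u ∧ K.Adj (v, f v u) (u, f u v) :=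
    fun v u => Iff.rfl
  generalize linkGraph G f K = L at *
  have hL : L ≤ G := fun v u h => ((hLadj v u).1 h).1
  have hp : ∀ x y, G.Adj x y → ¬ L.Adj x y → L.degree x + L.degree y = 1 := by
    intro x y hxy hn
    have h1 := hP (x, f x y) (y, f y x) ((hmag.2.2.2 _ _).2 (Or.inr ⟨hxy, rfl, rfl⟩))
      (fun h => hn ((hLadj _ _).2 ⟨hxy, h⟩))
    have aux : ∀ a b, G.Adj a b → ¬ L.Adj a b → L.degree a = K.degree (a, f a b) := by
      intro a b hab hn
      rcases hloc a with ⟨h2, h3, -⟩ | ⟨h2, h3, -⟩ | ⟨-, h3, -⟩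
      · rw [h2, h3 b hab hn]
      · rw [h2, h3 b hab hn]
      · exact (hn (h3 b hab)).elim
    rw [aux x y hxy hn, aux y x hxy.symm (fun h => hn h.symm), h1]
  have hcount := count_ab G L hL hcubic hp
  have h2 := two_ncard K
  have hs : ∀ v, ∑ i, K.degree (v, i) =
      (if L.degree v = 0 then 6 else 0) + (if L.degree v = 1 then 15 else 0) +
      (if L.degree v = 3 then 33 else 0) := by
    intro v
    rcases hloc v with ⟨h, -, h'⟩ | ⟨h, -, h'⟩ | ⟨h, -, h'⟩ <;> simp [h, h']
  have hone : ∀ v, 1 =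
      (if L.degree v = 0 then 1 else 0) + (if L.degree v = 1 then 1 else 0) +
      (if L.degree v = 3 then 1 else 0) := by
    intro v
    rcases hloc v with ⟨h, -, h'⟩ | ⟨h, -, h'⟩ | ⟨h, -, h'⟩ <;> simp [h]
  have hn : Fintype.card V = (Finset.univ.filter fun v => L.degree v = 0).card +
      (Finset.univ.filter fun v => L.degree v = 1).card +
      (Finset.univ.filter fun v => L.degree v = 3).card := by
    rw [Finset.card_filter, Finset.card_filter, Finset.card_filter, ← Finset.sum_add_distrib,
      ← Finset.sum_add_distrib, ← Finset.sum_congr rfl (fun v _ => hone v)]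
    simp
  rw [Finset.sum_congr rfl (fun v _ => hs v), Finset.sum_add_distrib, Finset.sum_add_distrib,
    ← Finset.sum_filter, ← Finset.sum_filter, ← Finset.sum_filter, Finset.sum_const,
    Finset.sum_const, Finset.sum_const, smul_eq_mul, smul_eq_mul, smul_eq_mul] at h2
  rw [le_div_iff₀ (by norm_num)] at hcard
  have hcard' : K.edgeSet.ncard * 10 ≤ 57 * Fintype.card V := by exact_mod_cast hcard
  have hzero : (Finset.univ.filter fun v => L.degree v = 3).card = 0 := by omega
  rw [Finset.card_eq_zero, Finset.filter_eq_empty_iff] at hzero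
  refine ⟨L.edgeSet, (eeds_iff G L).2 ⟨(peds_iff G L hL).2 hp, ?_⟩⟩
  intro v a b ha hb
  have hle : (L.neighborFinset v).card ≤ 1 := by
    rw [SimpleGraph.card_neighborFinset_eq_degree]
    rcases hloc v with ⟨h, -, h'⟩ | ⟨h, -, h'⟩ | ⟨h, -, h'⟩
    · omega
    · omega
    · exact (hzero (Finset.mem_univ v) h).elim
  exact Finset.card_le_one.1 hle a (by simpa using ha) b (by simpa using hb)

/-- A cubic graph `G` on `n` vertices admits an efficient edge dominating set if
and only if its magnification has a perfect edge dominating set of size at most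
`57 n / 10`. -/
theorem magnification_eeds_iff_peds {V : Type*} [Fintype V] (G : SimpleGraph V)
    (hcubic : IsRegular' G 3) (f : V → V → Fin 12) (H : SimpleGraph (V × Fin 12))
    (hmag : IsMagnification G f H) :
    (∃ D : Set (Sym2 V), IsEEDS G D) ↔
    (∃ P : Set (Sym2 (V × Fin 12)), IsPEDS H P ∧
      (P.ncard : ℚ) ≤ 57 * Fintype.card V / 10) := by
  constructor
  · rintro ⟨D, hD⟩
    exact forward G hcubic f H hmag D hD
  · rintro ⟨P, hP, hc⟩
    exact backward G hcubic f H hmag P hP hc
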